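/- arXiv:2202.08941 — 2 statements merged into one kernel-verified Lean document; each statement's English description precedes it below -/
import Mathlib

section
/- Let G be a negative definite symmetric integer matrix on a finite set V whose off-diagonal entries lie in {0,1} and whose associated graph is a forest, with an unweighted vertex v₀ attached via ε : V → {0,1} having at most one attaching vertex in each connected component. Let v ∈ V be a weighted vertex. (i) If the connected component of v contains no attaching vertex of v₀, then Δ_v[K+v₀,E] = Δ_v[K,E] for every characteristic vector K and every E with v ∈ E. (ii) If the component of v contains the attaching vertex u, let m = (distance from v to u in the graph) + 1 be the distance from v to v₀ in the graph with v₀ attached; if m is odd then Δ_v[K+v₀,E] ≥ Δ_v[K,E] for all such cubes, and if m is even then Δ_v[K+v₀,E] ≤ Δ_v[K,E]. Consequently, when m is odd any choice of maxima in the direction v that always prefers the larger of two h_U-maximizing indices is tuned to v₀, and when m is even any choice preferring the smaller is tuned to v₀; when v and v₀ lie in different components, both are tuned. -/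
/-!
For a vertex set `I`, `h_U(K + x_I) = h_U(K) + 2 f([K,I])` (`hU_indVec`), so along a `v`-orbit the
increments of `h_U` are `2 Δ_v[K + iv, E ∪ v]` and those of `h_V` are
`2 Δ_v[K + iv + v₀, E ∪ v]` (`hUcube_step`, `hVcube_step`). Once `Δ_v[K + v₀, E]` and
`Δ_v[K, E]` are compared, `h_V - h_U` is monotone or antitone along each orbit, and the claims on
tuned choices follow at once.

The comparison of `Δ_v` is a submodularity argument. Up to one-vertex terms, `f([K,I])` is the
number of edges inside `I`. The forest is bipartite, and complementing `I` on one colour class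
makes such a function submodular. Concretely (`exists_uncrossing`), a set `S ∋ v` and a set
`T ∌ v` are recombined by union and intersection, with the roles of the two exchanged at odd
distance from `v`, into `X ∋ v` and `Y ∌ v` with `f(X) + f(Y) ≤ f(S) + f(T)`. Translation by `v₀`
adds to `f([K,I])` the number of attaching vertices in `I`. At even distance from `v` one has
`Y ⊆ S`, hence `B_v[K] + A_v[K + v₀] ≤ B_v[K + v₀] + A_v[K]` (`delta_le_delta_of_even`); at odd
distance `X ⊆ T`, which gives the reverse comparison (`delta_le_delta_of_odd`). On components not
containing `v`, taking `X = T` and `Y = S` serves both cases, so attaching vertices there have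
no effect.
-/


open Matrix Finset

variable {V : Type*}

/-- Negative definiteness of a symmetric integer matrix, as a quadratic form over `ℚ`. -/
def MatNegDef [Fintype V] (G : Matrix V V ℤ) : Prop :=
  ∀ x : V → ℚ, x ≠ 0 → x ⬝ᵥ (G.map (Int.cast : ℤ → ℚ)).mulVec x < 0

/-- `K` is a characteristic vector for `G`: `K v ≡ G v v (mod 2)` for all `v`. -/
def IsCharacteristic [Fintype V] (G : Matrix V V ℤ) (K : V → ℤ) : Prop :=
  ∀ v : V, (2 : ℤ) ∣ (K v - G v v)

/-- The translate `K + x` of a characteristic vector by `x : V → ℤ`. -/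
def chTrans [Fintype V] (G : Matrix V V ℤ) (K : V → ℤ) (x : V → ℤ) : V → ℤ :=
  fun u => K u + 2 * G.mulVec x u

/-- `i` times the standard basis vector at `v`. -/
def dirVec [DecidableEq V] (v : V) (i : ℤ) : V → ℤ := fun u => if u = v then i else 0

/-- The height function `h_U(K) = (Kᵀ G⁻¹ K + s)/4`. -/
noncomputable def hU [Fintype V] [DecidableEq V] (G : Matrix V V ℤ) (K : V → ℤ) : ℚ :=
  ((fun u => (K u : ℚ)) ⬝ᵥ ((G.map (Int.cast : ℤ → ℚ))⁻¹).mulVec (fun u => (K u : ℚ))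
      + (Fintype.card V : ℚ)) / 4

/-- The height of a cube: `h_U([K,E]) = min_{I ⊆ E} h_U(K + Σ_{v ∈ I} e_v)`. -/
noncomputable def hUcube [Fintype V] [DecidableEq V] (G : Matrix V V ℤ) (K : V → ℤ)
    (E : Finset V) : ℚ :=
  E.powerset.inf' (Finset.powerset_nonempty _)
    (fun I => hU G (chTrans G K (fun u => if u ∈ I then (1 : ℤ) else 0)))

/-- The translate `K + v₀` by the unweighted vertex, attached via `ε`. -/
def knotTrans (K ε : V → ℤ) : V → ℤ := fun u => K u + 2 * ε u

/-- The second height function `h_V([K,E]) = h_U([K + v₀, E])`. -/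
noncomputable def hVcube [Fintype V] [DecidableEq V] (G : Matrix V V ℤ) (ε : V → ℤ)
    (K : V → ℤ) (E : Finset V) : ℚ :=
  hUcube G (knotTrans K ε) E

/-- `f([K,I]) = ((Σ_{v∈I} K v) + x_Iᵀ G x_I)/2`. -/
noncomputable def fKI [Fintype V] [DecidableEq V] (G : Matrix V V ℤ) (K : V → ℤ)
    (I : Finset V) : ℚ :=
  (((∑ u ∈ I, K u) +
      (fun u => if u ∈ I then (1 : ℤ) else 0) ⬝ᵥ
        G.mulVec (fun u => if u ∈ I then (1 : ℤ) else 0) : ℤ) : ℚ) / 2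

/-- `A_v[K,E] = min_{I ⊆ E∖{v}} f([K,I])`. -/
noncomputable def Av [Fintype V] [DecidableEq V] (G : Matrix V V ℤ) (K : V → ℤ)
    (w : V) (E : Finset V) : ℚ :=
  ((E.erase w).powerset).inf' (Finset.powerset_nonempty _) (fun I => fKI G K I)

/-- `B_v[K,E] = min_{v ∈ I ⊆ E} f([K,I])`. -/
noncomputable def Bv [Fintype V] [DecidableEq V] (G : Matrix V V ℤ) (K : V → ℤ)
    (w : V) (E : Finset V) : ℚ :=
  ((E.erase w).powerset).inf' (Finset.powerset_nonempty _) (fun I => fKI G K (insert w I))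

/-- The graph of `G`: an edge between `u ≠ w` exactly when `G u w = 1`. -/
def graphOf (G : Matrix V V ℤ) : SimpleGraph V :=
  SimpleGraph.fromRel (fun u w => G u w = 1)

/-- The (unique, in a forest) path from `x` to `v` passes through `u`. -/
def onPath (Γ : SimpleGraph V) (x v u : V) : Prop :=
  ∃ p : Γ.Walk x v, p.IsPath ∧ u ∈ p.support

/-- `E_u^v`: the elements of `E` whose path to `v` passes through `u`. -/
noncomputable def Esub (Γ : SimpleGraph V) (E : Finset V) (u v : V) : Finset V :=
  @Finset.filter _ (fun x => onPath Γ x v u) (Classical.decPred _) E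

/-- `mt` is a choice of maxima in the direction `v`: it depends only on the `v`-orbit and
picks an `h_U`-maximizer in each orbit of cubes. -/
def IsChoiceOfMaxima [Fintype V] [DecidableEq V] (G : Matrix V V ℤ) (v : V)
    (mt : (V → ℤ) → Finset V → ℤ) : Prop :=
  (∀ K, IsCharacteristic G K → ∀ E : Finset V, v ∉ E → ∀ i : ℤ,
    mt (chTrans G K (dirVec v i)) E = mt K E - i) ∧
  (∀ K, IsCharacteristic G K → ∀ E : Finset V, v ∉ E → ∀ i : ℤ,
    hUcube G (chTrans G K (dirVec v i)) E ≤ hUcube G (chTrans G K (dirVec v (mt K E))) E)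

/-- `mt` always prefers the larger of two `h_U`-maximizing indices. -/
def PrefersLarger [Fintype V] [DecidableEq V] (G : Matrix V V ℤ) (v : V)
    (mt : (V → ℤ) → Finset V → ℤ) : Prop :=
  ∀ K, IsCharacteristic G K → ∀ E : Finset V, v ∉ E → ∀ i : ℤ,
    hUcube G (chTrans G K (dirVec v i)) E = hUcube G (chTrans G K (dirVec v (mt K E))) E →
    i ≤ mt K E

/-- `mt` always prefers the smaller of two `h_U`-maximizing indices. -/
def PrefersSmaller [Fintype V] [DecidableEq V] (G : Matrix V V ℤ) (v : V)
    (mt : (V → ℤ) → Finset V → ℤ) : Prop :=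
  ∀ K, IsCharacteristic G K → ∀ E : Finset V, v ∉ E → ∀ i : ℤ,
    hUcube G (chTrans G K (dirVec v i)) E = hUcube G (chTrans G K (dirVec v (mt K E))) E →
    mt K E ≤ i

/-- `mt` is tuned to `v₀`: among the `h_U`-maximizers of each `v`-orbit it maximizes `h_V`. -/
def IsTunedTo [Fintype V] [DecidableEq V] (G : Matrix V V ℤ) (ε : V → ℤ) (v : V)
    (mt : (V → ℤ) → Finset V → ℤ) : Prop :=
  ∀ K, IsCharacteristic G K → ∀ E : Finset V, v ∉ E → ∀ i : ℤ,
    hUcube G (chTrans G K (dirVec v i)) E = hUcube G (chTrans G K (dirVec v (mt K E))) E →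
    hVcube G ε (chTrans G K (dirVec v i)) E ≤ hVcube G ε (chTrans G K (dirVec v (mt K E))) E

/-- The 0/1 indicator vector of a set of vertices. -/
def indVec [DecidableEq V] (S : Finset V) : V → ℤ := fun u => if u ∈ S then 1 else 0

/-! ### The exchange inequality -/

lemma fKI_eq [Fintype V] [DecidableEq V] (G : Matrix V V ℤ) (K : V → ℤ) (S : Finset V) :
    fKI G K S = (((∑ u, K u * indVec S u) +
      ∑ a, ∑ b, G a b * (indVec S a * indVec S b) : ℤ) : ℚ) / 2 := by
  unfold fKI
  congr 2
  congr 1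
  · simp [indVec]
  · simp only [dotProduct, mulVec, Finset.mul_sum]
    refine Finset.sum_congr rfl fun a _ => Finset.sum_congr rfl fun b _ => ?_
    unfold indVec
    ring

lemma fKI_knotTrans [Fintype V] [DecidableEq V] (G : Matrix V V ℤ) (K ε : V → ℤ)
    (S : Finset V) :
    fKI G (knotTrans K ε) S = fKI G K S + ((∑ u ∈ S, ε u : ℤ) : ℚ) := by
  unfold fKI knotTrans
  rw [Finset.sum_add_distrib, ← Finset.mul_sum]
  push_cast
  ring

/-- Uncrossing: on the component of `v`, the pair `(S, T)` is replaced by `(S ∪ T, S ∩ T)` at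
even distance from `v` and by `(S ∩ T, S ∪ T)` at odd distance; off the component the two sets
are swapped. Every edge joins the two distance parities, so the pairwise terms of `f`, all with
nonnegative coefficient, do not increase in total; the one-vertex terms are merely rearranged. -/
lemma exists_uncrossing [Fintype V] [DecidableEq V]
    (G : Matrix V V ℤ) (hoff : ∀ u w : V, u ≠ w → G u w = 0 ∨ G u w = 1)
    (hforest : (graphOf G).IsAcyclic) (K : V → ℤ) (v : V) (S T : Finset V)
    (hS : v ∈ S) (hT : v ∉ T) :
    ∃ X Y : Finset V, v ∈ X ∧ v ∉ Y ∧ X ⊆ S ∪ T ∧ Y ⊆ S ∪ T ∧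
      fKI G K X + fKI G K Y ≤ fKI G K S + fKI G K T ∧
      (∀ u, (¬ (graphOf G).Reachable v u ∨ Even ((graphOf G).dist v u)) → u ∈ Y → u ∈ S) ∧
      (∀ u, (¬ (graphOf G).Reachable v u ∨ Odd ((graphOf G).dist v u)) → u ∈ X → u ∈ T) := by
  classical
  set Γ := graphOf G with hΓ
  let X : Finset V := Finset.univ.filter fun w =>
    if Γ.Reachable v w then
      (if Even (Γ.dist v w) then w ∈ S ∨ w ∈ T else w ∈ S ∧ w ∈ T) else w ∈ T
  let Y : Finset V := Finset.univ.filter fun w =>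
    if Γ.Reachable v w then
      (if Even (Γ.dist v w) then w ∈ S ∧ w ∈ T else w ∈ S ∨ w ∈ T) else w ∈ S
  have hX : ∀ w, w ∈ X ↔ if Γ.Reachable v w then
      (if Even (Γ.dist v w) then w ∈ S ∨ w ∈ T else w ∈ S ∧ w ∈ T) else w ∈ T := by
    intro w; simp [X]
  have hY : ∀ w, w ∈ Y ↔ if Γ.Reachable v w then
      (if Even (Γ.dist v w) then w ∈ S ∧ w ∈ T else w ∈ S ∨ w ∈ T) else w ∈ S := by
    intro w; simp [Y]
  clear_value X Y
  have hlin : ∀ a, indVec X a + indVec Y a = indVec S a + indVec T a := by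
    intro a
    simp only [indVec, hX, hY]
    by_cases h1 : Γ.Reachable v a <;> by_cases h2 : Even (Γ.dist v a) <;>
      by_cases h3 : a ∈ S <;> by_cases h4 : a ∈ T <;> simp [h1, h2, h3, h4]
  have hquad : ∀ a b, G a b * (indVec X a * indVec X b) + G a b * (indVec Y a * indVec Y b) ≤
      G a b * (indVec S a * indVec S b) + G a b * (indVec T a * indVec T b) := by
    intro a b
    rcases eq_or_ne a b with rfl | hab
    · have hsq : ∀ Z : Finset V, indVec Z a * indVec Z a = indVec Z a := by
        intro Z; unfold indVec; split_ifs <;> simp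
      rw [hsq, hsq, hsq, hsq, ← mul_add, ← mul_add, hlin]
    · rcases hoff a b hab with h0 | h0
      · simp [h0]
      · have hadj : Γ.Adj a b := by
          rw [hΓ, graphOf, SimpleGraph.fromRel_adj]
          exact ⟨hab, Or.inl h0⟩
        have hr : Γ.Reachable v a ↔ Γ.Reachable v b :=
          ⟨fun h => h.trans hadj.reachable, fun h => h.trans hadj.symm.reachable⟩
        simp only [h0, one_mul, indVec, hX, hY]
        by_cases h1 : Γ.Reachable v a
        · have h1' := hr.1 h1
          have hpar : Even (Γ.dist v b) ↔ ¬ Even (Γ.dist v a) := by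
            rcases hforest.dist_eq_dist_add_one_of_adj_of_reachable v hadj h1 with h | h <;>
              simp [h, Nat.even_add_one]
          by_cases h2 : Even (Γ.dist v a) <;>
            by_cases h3 : a ∈ S <;> by_cases h4 : a ∈ T <;>
            by_cases h5 : b ∈ S <;> by_cases h6 : b ∈ T <;>
            simp [h1, h1', hpar, h2, h3, h4, h5, h6]
        · have h1' : ¬ Γ.Reachable v b := fun h => h1 (hr.2 h)
          simp only [h1, h1', if_false]
          exact le_of_eq (add_comm _ _)
  refine ⟨X, Y, ?_, ?_, ?_, ?_, ?_, ?_, ?_⟩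
  · simp [hX, hS]
  · simp [hY, hT]
  · intro w hw
    rw [hX] at hw
    rw [Finset.mem_union]
    split_ifs at hw <;> tauto
  · intro w hw
    rw [hY] at hw
    rw [Finset.mem_union]
    split_ifs at hw <;> tauto
  · simp only [fKI_eq]
    rw [← add_div, ← add_div]
    refine div_le_div_of_nonneg_right ?_ (by norm_num)
    norm_cast
    have e1 : ∑ u, K u * indVec X u + ∑ u, K u * indVec Y u =
        ∑ u, K u * indVec S u + ∑ u, K u * indVec T u := by
      rw [← Finset.sum_add_distrib, ← Finset.sum_add_distrib]
      refine Finset.sum_congr rfl fun u _ => ?_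
      rw [← mul_add, ← mul_add, hlin]
    have e2 : ∑ a, ∑ b, G a b * (indVec X a * indVec X b) +
        ∑ a, ∑ b, G a b * (indVec Y a * indVec Y b) ≤
        ∑ a, ∑ b, G a b * (indVec S a * indVec S b) +
        ∑ a, ∑ b, G a b * (indVec T a * indVec T b) := by
      simp only [← Finset.sum_add_distrib]
      exact Finset.sum_le_sum fun a _ => Finset.sum_le_sum fun b _ => hquad a b
    linarith
  · intro u hu hw
    rw [hY] at hw
    split_ifs at hw <;> tauto
  · intro u hu hw
    rw [hX] at hw
    rw [← Nat.not_even_iff_odd] at hu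
    split_ifs at hw <;> tauto

/-! ### Monotonicity of `Δ_v` under translation by `v₀` -/

lemma exists_eq_Av [Fintype V] [DecidableEq V] (G : Matrix V V ℤ) (K : V → ℤ) (v : V)
    (E : Finset V) : ∃ T ⊆ E, v ∉ T ∧ Av G K v E = fKI G K T := by
  obtain ⟨T, hT, h⟩ := Finset.exists_mem_eq_inf' (Finset.powerset_nonempty (E.erase v))
    (fun I => fKI G K I)
  rw [Finset.mem_powerset, Finset.subset_erase] at hT
  exact ⟨T, hT.1, hT.2, h⟩

lemma Av_le [Fintype V] [DecidableEq V] (G : Matrix V V ℤ) (K : V → ℤ) (v : V)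
    (E T : Finset V) (hT : T ⊆ E) (hv : v ∉ T) : Av G K v E ≤ fKI G K T :=
  Finset.inf'_le (fun I => fKI G K I)
    (Finset.mem_powerset.2 (Finset.subset_erase.2 ⟨hT, hv⟩))

lemma exists_eq_Bv [Fintype V] [DecidableEq V] (G : Matrix V V ℤ) (K : V → ℤ) (v : V)
    (E : Finset V) (hv : v ∈ E) : ∃ S ⊆ E, v ∈ S ∧ Bv G K v E = fKI G K S := by
  obtain ⟨T, hT, h⟩ := Finset.exists_mem_eq_inf' (Finset.powerset_nonempty (E.erase v))
    (fun I => fKI G K (insert v I))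
  rw [Finset.mem_powerset, Finset.subset_erase] at hT
  exact ⟨insert v T, Finset.insert_subset hv hT.1, Finset.mem_insert_self _ _, h⟩

lemma Bv_le [Fintype V] [DecidableEq V] (G : Matrix V V ℤ) (K : V → ℤ) (v : V)
    (E S : Finset V) (hS : S ⊆ E) (hv : v ∈ S) : Bv G K v E ≤ fKI G K S := by
  have h := Finset.inf'_le (fun I => fKI G K (insert v I))
    (Finset.mem_powerset.2 (Finset.erase_subset_erase v hS))
  rwa [Finset.insert_erase hv] at h

lemma sum_le_sum_of_support [DecidableEq V] (ε : V → ℤ) (hε : ∀ u, ε u = 0 ∨ ε u = 1)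
    (A B : Finset V) (h : ∀ u, ε u = 1 → u ∈ A → u ∈ B) : ∑ u ∈ A, ε u ≤ ∑ u ∈ B, ε u := by
  rw [← Finset.sum_filter_ne_zero A]
  refine Finset.sum_le_sum_of_subset_of_nonneg (fun u hu => ?_) fun u _ _ => ?_
  · rw [Finset.mem_filter] at hu
    exact h u ((hε u).resolve_left hu.2) hu.1
  · rcases hε u with h0 | h0 <;> simp [h0]

/-- Uncrossing a minimizer for `B_v[K + v₀, E]` with one for `A_v[K, E]`. -/
lemma delta_le_delta_of_even [Fintype V] [DecidableEq V]
    (G : Matrix V V ℤ) (hoff : ∀ u w : V, u ≠ w → G u w = 0 ∨ G u w = 1)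
    (hforest : (graphOf G).IsAcyclic) (ε : V → ℤ) (hε : ∀ u, ε u = 0 ∨ ε u = 1) (v : V)
    (h : ∀ u, ε u = 1 → ¬ (graphOf G).Reachable v u ∨ Even ((graphOf G).dist v u))
    (K : V → ℤ) (E : Finset V) (hv : v ∈ E) :
    Bv G K v E - Av G K v E ≤ Bv G (knotTrans K ε) v E - Av G (knotTrans K ε) v E := by
  obtain ⟨S, hSE, hvS, hS⟩ := exists_eq_Bv G (knotTrans K ε) v E hv
  obtain ⟨T, hTE, hvT, hT⟩ := exists_eq_Av G K v E
  obtain ⟨X, Y, hvX, hvY, hXs, hYs, hle, hYS, -⟩ :=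
    exists_uncrossing G hoff hforest K v S T hvS hvT
  have hu := Finset.union_subset hSE hTE
  have hB := Bv_le G K v E X (hXs.trans hu) hvX
  have hA := Av_le G (knotTrans K ε) v E Y (hYs.trans hu) hvY
  rw [fKI_knotTrans] at hA hS
  have hsum : ((∑ u ∈ Y, ε u : ℤ) : ℚ) ≤ ((∑ u ∈ S, ε u : ℤ) : ℚ) :=
    Int.cast_le.2 (sum_le_sum_of_support ε hε Y S fun u h1 => hYS u (h u h1))
  linarith

/-- Uncrossing a minimizer for `B_v[K, E]` with one for `A_v[K + v₀, E]`. -/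
lemma delta_le_delta_of_odd [Fintype V] [DecidableEq V]
    (G : Matrix V V ℤ) (hoff : ∀ u w : V, u ≠ w → G u w = 0 ∨ G u w = 1)
    (hforest : (graphOf G).IsAcyclic) (ε : V → ℤ) (hε : ∀ u, ε u = 0 ∨ ε u = 1) (v : V)
    (h : ∀ u, ε u = 1 → ¬ (graphOf G).Reachable v u ∨ Odd ((graphOf G).dist v u))
    (K : V → ℤ) (E : Finset V) (hv : v ∈ E) :
    Bv G (knotTrans K ε) v E - Av G (knotTrans K ε) v E ≤ Bv G K v E - Av G K v E := by
  obtain ⟨S, hSE, hvS, hS⟩ := exists_eq_Bv G K v E hv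
  obtain ⟨T, hTE, hvT, hT⟩ := exists_eq_Av G (knotTrans K ε) v E
  obtain ⟨X, Y, hvX, hvY, hXs, hYs, hle, -, hXT⟩ :=
    exists_uncrossing G hoff hforest K v S T hvS hvT
  have hu := Finset.union_subset hSE hTE
  have hB := Bv_le G (knotTrans K ε) v E X (hXs.trans hu) hvX
  have hA := Av_le G K v E Y (hYs.trans hu) hvY
  rw [fKI_knotTrans] at hB hT
  have hsum : ((∑ u ∈ X, ε u : ℤ) : ℚ) ≤ ((∑ u ∈ T, ε u : ℤ) : ℚ) :=
    Int.cast_le.2 (sum_le_sum_of_support ε hε X T fun u h1 => hXT u (h u h1))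
  linarith

/-! ### Heights along an orbit -/

lemma isUnit_det_of_negDef [Fintype V] [DecidableEq V] (G : Matrix V V ℤ)
    (hneg : MatNegDef G) : IsUnit (G.map (Int.cast : ℤ → ℚ)).det := by
  rw [isUnit_iff_ne_zero]
  intro h0
  obtain ⟨x, hx, hGx⟩ := Matrix.exists_mulVec_eq_zero_iff.2 h0
  have := hneg x hx
  rw [hGx, dotProduct_zero] at this
  exact lt_irrefl _ this

lemma hU_chTrans [Fintype V] [DecidableEq V] (G : Matrix V V ℤ) (hsym : G.IsSymm)
    (hneg : MatNegDef G) (K x : V → ℤ) :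
    hU G (chTrans G K x) = hU G K + ((K ⬝ᵥ x + x ⬝ᵥ G.mulVec x : ℤ) : ℚ) := by
  have hdet := isUnit_det_of_negDef G hneg
  set M := G.map (Int.cast : ℤ → ℚ) with hM
  have hMs : M.IsSymm := hsym.map _
  set k : V → ℚ := fun u => (K u : ℚ) with hk
  set y : V → ℚ := fun u => (x u : ℚ) with hy
  have hcast : (fun u => ((chTrans G K x u : ℤ) : ℚ)) = k + (2 : ℚ) • M.mulVec y := by
    funext u
    simp [chTrans, hM, hk, hy, mulVec, dotProduct]
  have hrhs : ((K ⬝ᵥ x + x ⬝ᵥ G.mulVec x : ℤ) : ℚ) = k ⬝ᵥ y + y ⬝ᵥ M.mulVec y := by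
    simp [hM, hk, hy, mulVec, dotProduct]
  have hinv : M⁻¹.mulVec (M.mulVec y) = y := by
    rw [mulVec_mulVec, nonsing_inv_mul _ hdet, one_mulVec]
  have hcross : M.mulVec y ⬝ᵥ M⁻¹.mulVec k = k ⬝ᵥ y := by
    have h1 : M.mulVec y = vecMul y M := by
      rw [← mulVec_transpose, hMs.eq]
    rw [h1, ← dotProduct_mulVec, mulVec_mulVec, mul_nonsing_inv _ hdet, one_mulVec,
      dotProduct_comm]
  unfold hU
  rw [hrhs, hcast, ← hM, ← hk, mulVec_add, mulVec_smul, hinv, add_dotProduct, dotProduct_add,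
    dotProduct_add, smul_dotProduct, smul_dotProduct, dotProduct_smul, dotProduct_smul, hcross,
    dotProduct_comm (M.mulVec y) y]
  simp only [smul_eq_mul]
  ring

lemma chTrans_chTrans [Fintype V] (G : Matrix V V ℤ) (K x y : V → ℤ) :
    chTrans G (chTrans G K x) y = chTrans G K (x + y) := by
  funext u
  simp only [chTrans, mulVec_add, Pi.add_apply]
  ring

lemma dirVec_add [DecidableEq V] (v : V) (i j : ℤ) :
    dirVec v i + dirVec v j = dirVec v (i + j) := by
  funext u
  by_cases h : u = v <;> simp [dirVec, h]

lemma knotTrans_chTrans [Fintype V] (G : Matrix V V ℤ) (K ε x : V → ℤ) :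
    knotTrans (chTrans G K x) ε = chTrans G (knotTrans K ε) x := by
  funext u
  simp only [chTrans, knotTrans]
  ring

/-- The heights of the corners of a cube, relative to its base point, are the values of `2 f`. -/
lemma hU_indVec [Fintype V] [DecidableEq V] (G : Matrix V V ℤ) (hsym : G.IsSymm)
    (hneg : MatNegDef G) (K : V → ℤ) (I : Finset V) :
    hU G (chTrans G K (indVec I)) = hU G K + 2 * fKI G K I := by
  rw [hU_chTrans G hsym hneg]
  have : K ⬝ᵥ indVec I = ∑ u ∈ I, K u := by
    simp [dotProduct, indVec]
  rw [this]
  unfold fKI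
  rw [mul_div_cancel₀ _ (two_ne_zero)]
  rfl

lemma inf'_affine {ι : Type*} (s : Finset ι) (hs : s.Nonempty) (c : ℚ) (g : ι → ℚ) :
    s.inf' hs (fun I => c + 2 * g I) = c + 2 * s.inf' hs g := by
  refine (Finset.apply_inf'_eq_inf'_comp hs (fun t : ℚ => c + 2 * t) ?_).symm
  intro a b
  exact Monotone.map_min (f := fun t : ℚ => c + 2 * t) fun p q h => by dsimp only; linarith

lemma hUcube_eq_Av [Fintype V] [DecidableEq V] (G : Matrix V V ℤ) (hsym : G.IsSymm)
    (hneg : MatNegDef G) (K : V → ℤ) (v : V) (E : Finset V) (hv : v ∉ E) :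
    hUcube G K E = hU G K + 2 * Av G K v (insert v E) := by
  unfold hUcube Av
  rw [← inf'_affine]
  simp only [Finset.erase_insert hv]
  exact Finset.inf'_congr _ rfl fun I _ => hU_indVec G hsym hneg K I

lemma hUcube_eq_Bv [Fintype V] [DecidableEq V] (G : Matrix V V ℤ) (hsym : G.IsSymm)
    (hneg : MatNegDef G) (K : V → ℤ) (v : V) (E : Finset V) (hv : v ∉ E) :
    hUcube G (chTrans G K (dirVec v 1)) E = hU G K + 2 * Bv G K v (insert v E) := by
  unfold hUcube Bv
  rw [← inf'_affine]
  simp only [Finset.erase_insert hv]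
  refine Finset.inf'_congr _ rfl fun I hI => ?_
  have hvI : v ∉ I := fun h => hv (Finset.mem_powerset.1 hI h)
  rw [← hU_indVec G hsym hneg, chTrans_chTrans]
  congr 2
  funext u
  by_cases h : u = v
  · subst h; simp [dirVec, indVec, hvI]
  · simp [dirVec, indVec, h]

lemma hUcube_step [Fintype V] [DecidableEq V] (G : Matrix V V ℤ) (hsym : G.IsSymm)
    (hneg : MatNegDef G) (K : V → ℤ) (v : V) (E : Finset V) (hv : v ∉ E) (i : ℤ) :
    hUcube G (chTrans G K (dirVec v (i + 1))) E - hUcube G (chTrans G K (dirVec v i)) E =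
      2 * (Bv G (chTrans G K (dirVec v i)) v (insert v E) -
        Av G (chTrans G K (dirVec v i)) v (insert v E)) := by
  rw [← dirVec_add, ← chTrans_chTrans, hUcube_eq_Bv G hsym hneg _ v E hv,
    hUcube_eq_Av G hsym hneg _ v E hv]
  ring

lemma hVcube_step [Fintype V] [DecidableEq V] (G : Matrix V V ℤ) (hsym : G.IsSymm)
    (hneg : MatNegDef G) (ε K : V → ℤ) (v : V) (E : Finset V) (hv : v ∉ E) (i : ℤ) :
    hVcube G ε (chTrans G K (dirVec v (i + 1))) E - hVcube G ε (chTrans G K (dirVec v i)) E =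
      2 * (Bv G (knotTrans (chTrans G K (dirVec v i)) ε) v (insert v E) -
        Av G (knotTrans (chTrans G K (dirVec v i)) ε) v (insert v E)) := by
  unfold hVcube
  simp only [knotTrans_chTrans]
  exact hUcube_step G hsym hneg (knotTrans K ε) v E hv i

/-! ### Tuned choices of maxima -/

/-- If `Δ_v` never decreases under translation by `v₀`, then `h_V - h_U` is nondecreasing along
each `v`-orbit, so of two `h_U`-maximizers the larger has the larger `h_V`. -/
lemma tuned_of_prefersLarger [Fintype V] [DecidableEq V] (G : Matrix V V ℤ) (hsym : G.IsSymm)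
    (hneg : MatNegDef G) (ε : V → ℤ) (v : V)
    (hΔ : ∀ (K : V → ℤ) (E : Finset V), v ∈ E →
      Bv G K v E - Av G K v E ≤ Bv G (knotTrans K ε) v E - Av G (knotTrans K ε) v E)
    (mt : (V → ℤ) → Finset V → ℤ) (hmt : PrefersLarger G v mt) : IsTunedTo G ε v mt := by
  intro K hK E hv i hi
  have hmono : Monotone fun j : ℤ => hVcube G ε (chTrans G K (dirVec v j)) E -
      hUcube G (chTrans G K (dirVec v j)) E := by
    refine monotone_int_of_le_succ fun j => ?_
    have h1 := hUcube_step G hsym hneg K v E hv j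
    have h2 := hVcube_step G hsym hneg ε K v E hv j
    have h3 := hΔ (chTrans G K (dirVec v j)) (insert v E) (Finset.mem_insert_self _ _)
    linarith
  have := hmono (hmt K hK E hv i hi)
  dsimp only at this
  linarith

lemma tuned_of_prefersSmaller [Fintype V] [DecidableEq V] (G : Matrix V V ℤ) (hsym : G.IsSymm)
    (hneg : MatNegDef G) (ε : V → ℤ) (v : V)
    (hΔ : ∀ (K : V → ℤ) (E : Finset V), v ∈ E →
      Bv G (knotTrans K ε) v E - Av G (knotTrans K ε) v E ≤ Bv G K v E - Av G K v E)
    (mt : (V → ℤ) → Finset V → ℤ) (hmt : PrefersSmaller G v mt) : IsTunedTo G ε v mt := by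
  intro K hK E hv i hi
  have hanti : Antitone fun j : ℤ => hVcube G ε (chTrans G K (dirVec v j)) E -
      hUcube G (chTrans G K (dirVec v j)) E := by
    refine antitone_int_of_succ_le fun j => ?_
    have h1 := hUcube_step G hsym hneg K v E hv j
    have h2 := hVcube_step G hsym hneg ε K v E hv j
    have h3 := hΔ (chTrans G K (dirVec v j)) (insert v E) (Finset.mem_insert_self _ _)
    linarith
  have := hanti (hmt K hK E hv i hi)
  dsimp only at this
  linarith

/-- Proposition `parityMatters`: (i) if the component of `v` contains no
attaching vertex of `v₀` then `Δ_v[K+v₀,E] = Δ_v[K,E]`, and both the larger-preferring and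
smaller-preferring choices of maxima are tuned to `v₀`; (ii) if the component of `v` contains
the attaching vertex `u` and `m = dist(v,u) + 1` is odd, then `Δ_v[K+v₀,E] ≥ Δ_v[K,E]` and
larger-preferring choices are tuned to `v₀`, while if `m` is even then
`Δ_v[K+v₀,E] ≤ Δ_v[K,E]` and smaller-preferring choices are tuned to `v₀`. -/
theorem parity_matters [Fintype V] [DecidableEq V]
    (G : Matrix V V ℤ) (hsym : G.IsSymm) (hneg : MatNegDef G)
    (hoff : ∀ u w : V, u ≠ w → G u w = 0 ∨ G u w = 1)
    (hforest : (graphOf G).IsAcyclic)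
    (ε : V → ℤ) (hε : ∀ u, ε u = 0 ∨ ε u = 1)
    (hatt : ∀ u w : V, ε u = 1 → ε w = 1 → (graphOf G).Reachable u w → u = w)
    (v : V) :
    ((∀ u : V, ε u = 1 → ¬ (graphOf G).Reachable v u) →
      (∀ K, IsCharacteristic G K → ∀ E : Finset V, v ∈ E →
        Bv G (knotTrans K ε) v E - Av G (knotTrans K ε) v E = Bv G K v E - Av G K v E) ∧
      (∀ mt, IsChoiceOfMaxima G v mt → PrefersLarger G v mt → IsTunedTo G ε v mt) ∧
      (∀ mt, IsChoiceOfMaxima G v mt → PrefersSmaller G v mt → IsTunedTo G ε v mt)) ∧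
    (∀ u : V, ε u = 1 → (graphOf G).Reachable v u →
      (Odd ((graphOf G).dist v u + 1) →
        (∀ K, IsCharacteristic G K → ∀ E : Finset V, v ∈ E →
          Bv G (knotTrans K ε) v E - Av G (knotTrans K ε) v E ≥ Bv G K v E - Av G K v E) ∧
        (∀ mt, IsChoiceOfMaxima G v mt → PrefersLarger G v mt → IsTunedTo G ε v mt)) ∧
      (Even ((graphOf G).dist v u + 1) →
        (∀ K, IsCharacteristic G K → ∀ E : Finset V, v ∈ E →
          Bv G (knotTrans K ε) v E - Av G (knotTrans K ε) v E ≤ Bv G K v E - Av G K v E) ∧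
        (∀ mt, IsChoiceOfMaxima G v mt → PrefersSmaller G v mt → IsTunedTo G ε v mt))) := by
  have hlarge : (∀ u, ε u = 1 → ¬ (graphOf G).Reachable v u ∨ Even ((graphOf G).dist v u)) →
      (∀ (K : V → ℤ) (E : Finset V), v ∈ E → Bv G K v E - Av G K v E ≤
        Bv G (knotTrans K ε) v E - Av G (knotTrans K ε) v E) :=
    fun h => delta_le_delta_of_even G hoff hforest ε hε v h
  have hsmall : (∀ u, ε u = 1 → ¬ (graphOf G).Reachable v u ∨ Odd ((graphOf G).dist v u)) →
      (∀ (K : V → ℤ) (E : Finset V), v ∈ E →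
        Bv G (knotTrans K ε) v E - Av G (knotTrans K ε) v E ≤ Bv G K v E - Av G K v E) :=
    fun h => delta_le_delta_of_odd G hoff hforest ε hε v h
  refine ⟨fun hno => ?_, fun u hu hvu => ⟨fun hm => ?_, fun hm => ?_⟩⟩
  · have h1 := hlarge fun u hu => Or.inl (hno u hu)
    have h2 := hsmall fun u hu => Or.inl (hno u hu)
    exact ⟨fun K _ E hv => le_antisymm (h2 K E hv) (h1 K E hv),
      fun mt _ hp => tuned_of_prefersLarger G hsym hneg ε v h1 mt hp,
      fun mt _ hp => tuned_of_prefersSmaller G hsym hneg ε v h2 mt hp⟩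
  · have h1 := hlarge fun w hw => by
      by_cases hr : (graphOf G).Reachable v w
      · -- `w` lies in the component of `u`, so it is the same attaching vertex
        obtain rfl := hatt u w hu hw (hvu.symm.trans hr)
        right
        rwa [Nat.odd_add_one, Nat.not_odd_iff_even] at hm
      · exact Or.inl hr
    exact ⟨fun K _ E hv => h1 K E hv,
      fun mt _ hp => tuned_of_prefersLarger G hsym hneg ε v h1 mt hp⟩
  · have h2 := hsmall fun w hw => by
      by_cases hr : (graphOf G).Reachable v w
      · obtain rfl := hatt u w hu hw (hvu.symm.trans hr)
        right
        rwa [Nat.even_add_one, Nat.not_even_iff_odd] at hm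
      · exact Or.inl hr
    exact ⟨fun K _ E hv => h2 K E hv,
      fun mt _ hp => tuned_of_prefersSmaller G hsym hneg ε v h2 mt hp⟩
end

section
/- Let G be a negative definite symmetric integer matrix on a finite set V with G(v₁,v₂) = 1 for distinct v₁, v₂ ∈ V, and let G' on V' = V ∪ {e} be the blow-up of G along the edge v₁v₂. Then G' is negative definite, and for every K : V∖{v₁,v₂} → ℚ and all p₁, p₂, j ∈ ℚ, writing (K,p₁,p₂,j) for the corresponding vector on V' and (K,p₁+j,p₂+j) for the corresponding vector on V, one has the quadratic form identity (K,p₁,p₂,j)ᵀ (G')⁻¹ (K,p₁,p₂,j) = (K,p₁+j,p₂+j)ᵀ G⁻¹ (K,p₁+j,p₂+j) − j². -/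
/-!
Write `χ` for the indicator vector of `{v₁, v₂}`. Since `G v₁ v₂ = G v₂ v₁ = 1`, the blow-up is the
block matrix with blocks `G - χ χᵀ`, `χ`, `χᵀ`, `-1`, so that
`G' (x, t) = (G x - (χ ⬝ x - t) χ, χ ⬝ x - t)` (`blowupE_mulVec_none`, `blowupE_mulVec_some`).

Pairing with `(x, t)` gives `xᵀ G x - (χ ⬝ x - t)²`, which is negative off the origin. For the
inverse, given `W = (w, j)` put `y = G⁻¹ (w + j χ)`; the formula shows that `(y, χ ⬝ y - j)` is the
preimage of `W` under `G'`, and pairing it with `W` gives `(w + j χ) ⬝ y - j²`.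
-/

open Matrix Finset

variable {V : Type*}

/-- The blow-up `G'` of `G` along the edge `v₁v₂`; `none` is the new vertex `e`. -/
def blowupE [DecidableEq V] (G : Matrix V V ℤ) (v₁ v₂ : V) :
    Matrix (Option V) (Option V) ℤ :=
  Matrix.of fun u w =>
    match u, w with
    | none, none => -1
    | none, some x => if x = v₁ ∨ x = v₂ then 1 else 0
    | some x, none => if x = v₁ ∨ x = v₂ then 1 else 0
    | some x, some y =>
        if (x = v₁ ∧ y = v₂) ∨ (x = v₂ ∧ y = v₁) then 0
        else if x = y then (if x = v₁ ∨ x = v₂ then G x y - 1 else G x y)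
        else G x y

/-- The blow-down projection `P`, sending `(K,p₁,p₂,j)` to `(K,p₁+j,p₂+j)`. -/
def blowdown [DecidableEq V] (v₁ v₂ : V) (K' : Option V → ℤ) : V → ℤ :=
  fun u => if u = v₁ ∨ u = v₂ then K' (some u) + K' none else K' (some u)

/-- The embedding of the old vertex set into the vertex set of the blow-up. -/
def someEmb (V : Type*) : V ↪ Option V := ⟨some, Option.some_injective V⟩

/-- The indicator vector of the two endpoints of the blown-up edge. -/
def edgeInd [DecidableEq V] (v₁ v₂ : V) : V → ℚ := fun u => if u = v₁ ∨ u = v₂ then 1 else 0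

theorem blowupE_mulVec_none [Fintype V] [DecidableEq V] (G : Matrix V V ℤ) (v₁ v₂ : V)
    (X : Option V → ℚ) :
    ((blowupE G v₁ v₂).map (Int.cast : ℤ → ℚ)).mulVec X none =
      edgeInd v₁ v₂ ⬝ᵥ (fun u => X (some u)) - X none := by
  simp only [mulVec, dotProduct, Fintype.sum_option, blowupE, edgeInd, map_apply, of_apply]
  push_cast
  ring

theorem blowupE_mulVec_some [Fintype V] [DecidableEq V] (G : Matrix V V ℤ) (hsym : G.IsSymm)
    (v₁ v₂ : V) (hne : v₁ ≠ v₂) (hedge : G v₁ v₂ = 1) (X : Option V → ℚ) (u : V) :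
    ((blowupE G v₁ v₂).map (Int.cast : ℤ → ℚ)).mulVec X (some u) =
      (G.map (Int.cast : ℤ → ℚ)).mulVec (fun u => X (some u)) u -
        (edgeInd v₁ v₂ ⬝ᵥ (fun u => X (some u)) - X none) * edgeInd v₁ v₂ u := by
  have hedge' : G v₂ v₁ = 1 := by rw [← hedge]; exact hsym.apply v₁ v₂
  have key : ∀ w, ((blowupE G v₁ v₂ (some u) (some w) : ℤ) : ℚ) =
      G u w - edgeInd v₁ v₂ w * edgeInd v₁ v₂ u := by
    intro w
    simp only [blowupE, edgeInd, of_apply]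
    by_cases h1 : u = v₁ <;> by_cases h2 : u = v₂ <;> by_cases h3 : w = v₁ <;>
      by_cases h4 : w = v₂ <;> by_cases h5 : u = w <;> simp_all
  have hnone : ((blowupE G v₁ v₂ (some u) none : ℤ) : ℚ) = edgeInd v₁ v₂ u := by
    simp [blowupE, edgeInd]
  simp only [mulVec, dotProduct, Fintype.sum_option, map_apply, key, hnone, sub_mul,
    Finset.sum_sub_distrib, Finset.sum_mul]
  have : ∀ w, edgeInd v₁ v₂ w * edgeInd v₁ v₂ u * X (some w) =
    edgeInd v₁ v₂ w * X (some w) * edgeInd v₁ v₂ u := fun w => by ring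
  simp only [this]
  ring

/-- A negative definite matrix has trivial kernel, hence is invertible over `ℚ`. -/
theorem MatNegDef.isUnit_det [Fintype V] [DecidableEq V] {G : Matrix V V ℤ} (h : MatNegDef G) :
    IsUnit (G.map (Int.cast : ℤ → ℚ)).det := by
  rw [isUnit_iff_ne_zero]
  intro h0
  obtain ⟨x, hx, hx0⟩ := exists_mulVec_eq_zero_iff.mpr h0
  simpa [hx0] using h x hx

/-- the blow-up `G'` of `G` along the edge `v₁v₂` is negative definite, and
the quadratic form identity
`(K,p₁,p₂,j)ᵀ (G')⁻¹ (K,p₁,p₂,j) = (K,p₁+j,p₂+j)ᵀ G⁻¹ (K,p₁+j,p₂+j) − j²` holds for all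
rational vectors. -/
theorem blowup_negdef_and_form_identity [Fintype V] [DecidableEq V]
    (G : Matrix V V ℤ) (hsym : G.IsSymm) (hneg : MatNegDef G)
    (v₁ v₂ : V) (hne : v₁ ≠ v₂) (hedge : G v₁ v₂ = 1) :
    MatNegDef (blowupE G v₁ v₂) ∧
    ∀ W : Option V → ℚ,
      W ⬝ᵥ (((blowupE G v₁ v₂).map (Int.cast : ℤ → ℚ))⁻¹).mulVec W =
        (fun u => if u = v₁ ∨ u = v₂ then W (some u) + W none else W (some u)) ⬝ᵥ
            ((G.map (Int.cast : ℤ → ℚ))⁻¹).mulVec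
              (fun u => if u = v₁ ∨ u = v₂ then W (some u) + W none else W (some u)) -
          W none ^ 2 := by
  have hneg' : MatNegDef (blowupE G v₁ v₂) := by
    intro X hX
    set x : V → ℚ := fun u => X (some u) with hx
    have hform : X ⬝ᵥ ((blowupE G v₁ v₂).map (Int.cast : ℤ → ℚ)).mulVec X =
        x ⬝ᵥ (G.map (Int.cast : ℤ → ℚ)).mulVec x - (edgeInd v₁ v₂ ⬝ᵥ x - X none) ^ 2 := by
      have hs : ∑ u, X (some u) * ((edgeInd v₁ v₂ ⬝ᵥ x - X none) * edgeInd v₁ v₂ u) =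
          (edgeInd v₁ v₂ ⬝ᵥ x - X none) * (edgeInd v₁ v₂ ⬝ᵥ x) := by
        generalize edgeInd v₁ v₂ ⬝ᵥ x - X none = c
        rw [dotProduct, Finset.mul_sum]
        exact Finset.sum_congr rfl fun u _ => by
          change x u * _ = _
          ring
      rw [dotProduct, Fintype.sum_option, blowupE_mulVec_none]
      simp only [blowupE_mulVec_some G hsym v₁ v₂ hne hedge, mul_sub, Finset.sum_sub_distrib]
      simp only [← mul_sub, ← hx, hs]
      simp only [dotProduct, hx]
      ring
    rw [hform]
    by_cases hx0 : x = 0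
    · have hn : X none ≠ 0 := by
        intro hn
        apply hX
        funext o
        cases o with
        | none => exact hn
        | some u => exact congrFun hx0 u
      simpa [hx0] using sq_pos_of_ne_zero hn
    · nlinarith [hneg x hx0, sq_nonneg (edgeInd v₁ v₂ ⬝ᵥ x - X none)]
  refine ⟨hneg', fun W => ?_⟩
  set p : V → ℚ := fun u => if u = v₁ ∨ u = v₂ then W (some u) + W none else W (some u) with hp
  have hpu : ∀ u, p u = W (some u) + W none * edgeInd v₁ v₂ u := by
    intro u
    simp only [hp, edgeInd]
    split_ifs <;> ring
  set y := ((G.map (Int.cast : ℤ → ℚ))⁻¹).mulVec p with hy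
  have hGy : (G.map (Int.cast : ℤ → ℚ)).mulVec y = p := by
    rw [hy, mulVec_mulVec, mul_nonsing_inv _ hneg.isUnit_det, one_mulVec]
  let Y : Option V → ℚ := fun o => o.elim (edgeInd v₁ v₂ ⬝ᵥ y - W none) y
  have hY : ((blowupE G v₁ v₂).map (Int.cast : ℤ → ℚ)).mulVec Y = W := by
    funext o
    cases o with
    | none => rw [blowupE_mulVec_none]; simp [Y]
    | some u =>
      rw [blowupE_mulVec_some G hsym v₁ v₂ hne hedge]
      simp only [Y, Option.elim_some, Option.elim_none]
      rw [hGy, hpu]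
      ring
  have hinv : (((blowupE G v₁ v₂).map (Int.cast : ℤ → ℚ))⁻¹).mulVec W = Y := by
    conv_lhs => rw [← hY]
    rw [mulVec_mulVec, nonsing_inv_mul _ hneg'.isUnit_det, one_mulVec]
  have hpy : p ⬝ᵥ y = ∑ u, W (some u) * y u + W none * (edgeInd v₁ v₂ ⬝ᵥ y) := by
    simp only [dotProduct, hpu, Finset.mul_sum, ← Finset.sum_add_distrib]
    exact Finset.sum_congr rfl fun u _ => by ring
  rw [hinv, hpy, dotProduct, Fintype.sum_option]
  simp only [Y, Option.elim_some, Option.elim_none]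
  ring
end
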